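/- Let F : (ℤ → ℤ) → (ℤ → ℤ) be the cellular automaton global map induced by the local function f(u,v) = 2 − (u+v−3)(u·v − u − v) (the rule of semigroup G₅). Suppose x : ℤ → ℤ satisfies x(i) ∈ {0,1,2} for all i ∈ ℤ. Then for every n ≥ 1 and every i ∈ ℤ, [F^[n] x] i = 1 + ∏_{j=0}^{n} (x(i+j)² − 3·x(i+j) + 1)^{C(n,j)} − ∏_{j=0}^{n} x(i+j)·(2 − x(i+j)), where C(n,j) is the binomial coefficient n choose j. -/

import Mathlib

theorem pascal_prod (a : ℕ → ℤ → ℤ) (h : ∀ n i, a (n + 1) i = a n i * a n (i + 1)) :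
    ∀ (n : ℕ) (i : ℤ), a n i = ∏ j ∈ Finset.range (n + 1), (a 0 (i + j)) ^ (n.choose j) := by
  intro n
  induction n with
  | zero => intro i; simp
  | succ n ih =>
    intro i
    rw [h, ih i, ih (i + 1), Finset.prod_range_succ' _ (n + 1)]
    simp only [Nat.choose_succ_succ, pow_add, Finset.prod_mul_distrib]
    have h1 : ∏ j ∈ Finset.range (n + 1), (a 0 (i + j)) ^ (n.choose j)
        = (∏ j ∈ Finset.range (n + 1), (a 0 (i + ((j + 1 : ℕ) : ℤ))) ^ (n.choose (j + 1)))
          * a 0 i := by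
      have h2 := Finset.prod_range_succ (fun j : ℕ => (a 0 (i + j)) ^ (n.choose j)) (n + 1)
      rw [Finset.prod_range_succ'] at h2
      simpa using h2.symm
    have h3 : ∏ j ∈ Finset.range (n + 1), (a 0 (i + 1 + j)) ^ (n.choose j)
        = ∏ j ∈ Finset.range (n + 1), (a 0 (i + ((j + 1 : ℕ) : ℤ))) ^ (n.choose j) := by
      refine Finset.prod_congr rfl fun j _ => ?_
      congr 2
      push_cast
      ring
    rw [h1, h3]
    simp only [Nat.succ_eq_add_one, Nat.choose_zero_right, pow_one, Nat.cast_zero, add_zero]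
    ring

/-- Rule G₅. -/
theorem stmt_6 (F : (ℤ → ℤ) → (ℤ → ℤ))
    (hF : ∀ x : ℤ → ℤ, ∀ i : ℤ,
      F x i = 2 - (x i + x (i + 1) - 3) * (x i * x (i + 1) - x i - x (i + 1)))
    (x : ℤ → ℤ) (hx : ∀ i : ℤ, x i ∈ ({0, 1, 2} : Set ℤ)) :
    ∀ n : ℕ, 1 ≤ n → ∀ i : ℤ,
      F^[n] x i = 1 + (∏ j ∈ Finset.range (n + 1),
          (x (i + j) ^ 2 - 3 * x (i + j) + 1) ^ (n.choose j))
        - ∏ j ∈ Finset.range (n + 1), x (i + j) * (2 - x (i + j)) := by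
  intro n hn i
  have hs : ∀ n i, F^[n] x i = 0 ∨ F^[n] x i = 1 ∨ F^[n] x i = 2 := by
    intro n
    induction n with
    | zero => intro i; simpa using hx i
    | succ n ih =>
      intro i
      rw [Function.iterate_succ_apply', hF]
      rcases ih i with h | h | h <;> rcases ih (i + 1) with h' | h' | h' <;> rw [h, h'] <;> norm_num
  have hr := pascal_prod (fun n i => -((F^[n] x i) ^ 2 - 3 * F^[n] x i + 1)) (by
    intro n i
    simp only [Function.iterate_succ_apply', hF]
    rcases hs n i with h | h | h <;> rcases hs n (i + 1) with h' | h' | h' <;>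
      rw [h, h'] <;> norm_num) n i
  have ht := pascal_prod (fun n i => F^[n] x i * (2 - F^[n] x i)) (by
    intro n i
    simp only [Function.iterate_succ_apply', hF]
    rcases hs n i with h | h | h <;> rcases hs n (i + 1) with h' | h' | h' <;>
      rw [h, h'] <;> norm_num) n i
  simp only [Function.iterate_zero, id] at hr ht
  have e1 : ∏ j ∈ Finset.range (n + 1), (-(x (i + j) ^ 2 - 3 * x (i + j) + 1)) ^ (n.choose j)
      = ∏ j ∈ Finset.range (n + 1), (x (i + j) ^ 2 - 3 * x (i + j) + 1) ^ (n.choose j) := by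
    have : ∀ j : ℕ, (-(x (i + j) ^ 2 - 3 * x (i + j) + 1)) ^ (n.choose j)
      = (-1) ^ (n.choose j) * (x (i + j) ^ 2 - 3 * x (i + j) + 1) ^ (n.choose j) :=
      fun j => neg_pow _ _
    simp only [this]
    rw [Finset.prod_mul_distrib, Finset.prod_pow_eq_pow_sum, Nat.sum_range_choose,
      Even.neg_one_pow ((Nat.even_pow).2 ⟨even_two, by omega⟩), one_mul]
  have e2 : ∏ j ∈ Finset.range (n + 1), (x (i + j) * (2 - x (i + j))) ^ (n.choose j)
      = ∏ j ∈ Finset.range (n + 1), x (i + j) * (2 - x (i + j)) := by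
    refine Finset.prod_congr rfl fun j hj => ?_
    have hc : n.choose j ≠ 0 := (Nat.choose_pos (by simp at hj; omega)).ne'
    rcases hs 0 (i + j) with h | h | h <;> simp only [Function.iterate_zero, id] at h <;>
      rw [h] <;> simp [hc]
  rw [← e1, ← e2, ← hr, ← ht]
  ring
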